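/- For every T ∈ ℕ, the following equivalence holds: [g(x_T) ≤ 0, and x_t ∉ F for all t ∈ {0,…,T}, and z₀ ≥ Σ_{k=0}^{T-1} c(x_k, π(x_k))] if and only if ĝ(x_T, y_T, z_T) ≤ 0. -/

import Mathlib

open Classical

/-- The shifted indicator `𝕀(x ∈ F)`: `1` if `x ∈ F` and `-1` otherwise. -/
noncomputable def shiftedInd {X : Type*} (F : Set X) (x : X) : ℝ :=
  if x ∈ F then 1 else -1

theorem shiftedInd_nonpos_iff {X : Type*} {F : Set X} {x : X} :
    shiftedInd F x ≤ 0 ↔ x ∉ F := by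
  by_cases hxF : x ∈ F <;> simp [shiftedInd, hxF]

theorem eq_partialSups_of_succ_eq_sup {α : Type*} [SemilatticeSup α] {a y : ℕ → α}
    (h_zero : y 0 = a 0) (h_succ : ∀ n, y (n + 1) = a (n + 1) ⊔ y n) : y = partialSups a := by
  funext n
  induction n with
  | zero => rw [h_zero, partialSups_zero]
  | succ n ih => rw [h_succ, ih, partialSups_add_one, sup_comm]

theorem eq_sub_sum_range_of_succ_eq_sub {G : Type*} [AddCommGroup G] {a z : ℕ → G}
    (h_succ : ∀ n, z (n + 1) = z n - a n) (n : ℕ) : z n = z 0 - ∑ k ∈ Finset.range n, a k := by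
  have sum_eq : ∑ k ∈ Finset.range n, a k = z 0 - z n := by
    simp only [← Finset.sum_range_sub', h_succ, sub_sub_cancel]
  rw [sum_eq, sub_sub_cancel]

/-- The stage costs `ℓ` may be those of a stochastic dynamics or of a time-dependent policy. -/
theorem min_cost_reach_avoid_augmented_equiv_general
    {X : Type*} (g : X → ℝ) (F : Set X) {C : ℝ} (hC : 0 < C)
    (x : ℕ → X) (ℓ y z : ℕ → ℝ)
    (hy0 : y 0 = shiftedInd F (x 0))
    (hy : ∀ t, y (t + 1) = max (shiftedInd F (x (t + 1))) (y t))
    (hz : ∀ t, z (t + 1) = z t - ℓ t) (T : ℕ) :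
    (g (x T) ≤ 0 ∧ (∀ t ≤ T, x t ∉ F) ∧ ∑ k ∈ Finset.range T, ℓ k ≤ z 0)
      ↔ max (g (x T)) (max (C * y T) (-z T)) ≤ 0 := by
  have avoid : C * y T ≤ 0 ↔ ∀ t ≤ T, x t ∉ F := by
    have y_eq : y = partialSups (fun t => shiftedInd F (x t)) :=
      eq_partialSups_of_succ_eq_sup hy0 hy
    rw [← smul_eq_mul, smul_nonpos_iff_nonpos_of_pos_left hC, y_eq, partialSups_le_iff]
    simp only [shiftedInd_nonpos_iff]
  have budget : -z T ≤ 0 ↔ ∑ k ∈ Finset.range T, ℓ k ≤ z 0 := by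
    rw [eq_sub_sum_range_of_succ_eq_sub hz, neg_nonpos, sub_nonneg]
  rw [max_le_iff, max_le_iff, avoid, budget]

/-- **Theorem 1 (Equivalence of the reach-avoid-budget constraints and the augmented goal).**
For every `T`, the reach constraint `g (x T) ≤ 0`, the avoid constraint
`x t ∉ F` for all `t ≤ T`, and the upper-bound property
`z₀ ≥ ∑_{k<T} c (x k) (π (x k))` hold if and only if the augmented state
`(x T, y T, z T)` lies in the augmented goal set, i.e. `gAug (x T) (y T) (z T) ≤ 0`. -/
theorem min_cost_reach_avoid_augmented_equiv
    {X U : Type*} (f : X → U → X) (π : X → U) (c : X → U → ℝ)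
    (g : X → ℝ) (F : Set X) (x₀ : X) (z₀ : ℝ) (C : ℝ) (hC : 0 < C)
    (x : ℕ → X) (y : ℕ → ℝ) (z : ℕ → ℝ)
    (hx0 : x 0 = x₀) (hx : ∀ t, x (t + 1) = f (x t) (π (x t)))
    (hy0 : y 0 = shiftedInd F x₀)
    (hy : ∀ t, y (t + 1) = max (shiftedInd F (x (t + 1))) (y t))
    (hz0 : z 0 = z₀) (hz : ∀ t, z (t + 1) = z t - c (x t) (π (x t)))
    (gAug : X → ℝ → ℝ → ℝ)
    (hgAug : ∀ a b d, gAug a b d = max (g a) (max (C * b) (-d)))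
    (T : ℕ) :
    (g (x T) ≤ 0 ∧ (∀ t ≤ T, x t ∉ F) ∧
        z₀ ≥ ∑ k ∈ Finset.range T, c (x k) (π (x k)))
      ↔ gAug (x T) (y T) (z T) ≤ 0 := by
  subst hx0 hz0
  rw [hgAug]
  exact min_cost_reach_avoid_augmented_equiv_general g F hC x _ y z hy0 hy hz T
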